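/- Assume X ≠ 0 so that λ_x = λ_max(XᵀX)/(4n) > 0. Every global minimizer z* of ℓ over the sparse set S is a strong τ-stationary point for every τ ∈ (0, 1/λ_x). -/

import Mathlib

open scoped RealInnerProductSpace BigOperators
open Matrix

/-- The number of nonzero entries of a vector (the ℓ₀ "norm"). -/
noncomputable def norm0 {p : ℕ} (z : EuclideanSpace ℝ (Fin p)) : ℕ :=
  {i | z i ≠ 0}.ncard

/-- The Euclidean projection of `w` onto the sparse set `S = {x : ‖x‖₀ ≤ s}`:
the set of points of `S` nearest to `w`. -/
noncomputable def projS {p : ℕ} (s : ℕ) (w : EuclideanSpace ℝ (Fin p)) :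
    Set (EuclideanSpace ℝ (Fin p)) :=
  {x | norm0 x ≤ s ∧ ∀ x' : EuclideanSpace ℝ (Fin p), norm0 x' ≤ s → ‖w - x‖ ≤ ‖w - x'‖}

/-!
The softplus function `t ↦ log (1 + exp t)` has second derivative `σ (1 - σ) ≤ 1 / 4`, where `σ` is
the sigmoid. Hence the logistic loss `ℓ` lies below its second-order model
`ℓ z + ⟪∇ℓ z, x - z⟫ + λ / 2 * ‖x - z‖ ^ 2` at every point `z`, with `λ = λ_max (XᵀX) / (4 n)`.
If `z` minimizes `ℓ` over a set `S`, the last two terms have a nonnegative sum for every `x ∈ S`.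
On the other hand, `‖z - τ • ∇ℓ z - x‖ ^ 2` exceeds its value at `x = z` by exactly
`2 τ ⟪∇ℓ z, x - z⟫ + ‖x - z‖ ^ 2 ≥ (1 - τ λ) * ‖x - z‖ ^ 2`, which is positive when `x ≠ z` and
`τ λ < 1`.
-/

open WithLp (toLp)

section NearestPoints

/-- The metric projection `P_S(w)` onto a set `S`. It is set-valued because a nonconvex `S` may have
several points nearest to `w`. -/
def nearestPoints {E : Type*} [SeminormedAddGroup E] (S : Set E) (w : E) : Set E :=
  {x | x ∈ S ∧ ∀ x' ∈ S, ‖w - x‖ ≤ ‖w - x'‖}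

theorem nearestPoints_eq_singleton {E : Type*} [SeminormedAddGroup E] {S : Set E} {w z : E}
    (hz : z ∈ S) (h : ∀ x ∈ S, x ≠ z → ‖w - z‖ < ‖w - x‖) : nearestPoints S w = {z} := by
  refine Set.eq_singleton_iff_unique_mem.2 ⟨⟨hz, fun x hx => ?_⟩, fun x ⟨hx, hxmin⟩ => ?_⟩
  · obtain rfl | hne := eq_or_ne x z
    exacts [le_rfl, (h x hx hne).le]
  · by_contra hne
    exact (h x hx hne).not_ge (hxmin z hz)

variable {E : Type*} [NormedAddCommGroup E] [InnerProductSpace ℝ E]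

theorem norm_sub_smul_sub_sq (z g x : E) (τ : ℝ) :
    ‖z - τ • g - x‖ ^ 2 =
      ‖z - τ • g - z‖ ^ 2 + 2 * τ * ⟪g, x - z⟫ + ‖x - z‖ ^ 2 := by
  rw [show z - τ • g - x = -(τ • g + (x - z)) by abel, show z - τ • g - z = -(τ • g) by abel,
    norm_neg, norm_neg, norm_add_sq_real, real_inner_smul_left, ← mul_assoc]

theorem nearestPoints_sub_smul_eq_singleton_of_isMinOn {f : E → ℝ} {S : Set E} {g z : E} {L τ : ℝ}
    (hz : z ∈ S) (hmin : IsMinOn f S z)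
    (hf : ∀ x ∈ S, f x ≤ f z + ⟪g, x - z⟫ + L / 2 * ‖x - z‖ ^ 2)
    (hτ : 0 ≤ τ) (hτL : τ * L < 1) : nearestPoints S (z - τ • g) = {z} := by
  refine nearestPoints_eq_singleton hz fun x hx hne => lt_of_pow_lt_pow_left₀ 2 (norm_nonneg _) ?_
  have hmodel : 0 ≤ ⟪g, x - z⟫ + L / 2 * ‖x - z‖ ^ 2 := by
    linarith [hf x hx, isMinOn_iff.1 hmin x hx]
  have hgap : 0 < (1 - τ * L) * ‖x - z‖ ^ 2 :=
    mul_pos (sub_pos.2 hτL) (pow_pos (norm_sub_pos_iff.2 hne) 2)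
  calc ‖z - τ • g - z‖ ^ 2
    _ < ‖z - τ • g - z‖ ^ 2 + 2 * τ * (⟪g, x - z⟫ + L / 2 * ‖x - z‖ ^ 2)
        + (1 - τ * L) * ‖x - z‖ ^ 2 := by
      linarith [mul_nonneg (mul_nonneg zero_le_two hτ) hmodel]
    _ = ‖z - τ • g - z‖ ^ 2 + 2 * τ * ⟪g, x - z⟫ + ‖x - z‖ ^ 2 := by ring
    _ = ‖z - τ • g - x‖ ^ 2 := (norm_sub_smul_sub_sq z g x τ).symm

end NearestPoints

section Softplus

theorem le_quadratic_of_hasDerivAt2_le {f f' f'' : ℝ → ℝ} {M : ℝ}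
    (hf : ∀ t, HasDerivAt f (f' t) t) (hf' : ∀ t, HasDerivAt f' (f'' t) t) (hM : ∀ t, f'' t ≤ M)
    (a b : ℝ) : f b ≤ f a + f' a * (b - a) + M / 2 * (b - a) ^ 2 := by
  let gap (t : ℝ) : ℝ := f' a * (t - a) + M / 2 * (t - a) ^ 2 - f t
  have hgap (t : ℝ) : HasDerivAt gap (f' a + M * (t - a) - f' t) t := by
    have hid := (hasDerivAt_id' t).sub_const a
    exact (((hid.const_mul (f' a)).add ((hid.pow 2).const_mul (M / 2))).sub (hf t)).congr_deriv
      (by ring)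
  have hgap' (t : ℝ) : HasDerivAt (fun t => f' a + M * (t - a) - f' t) (M - f'' t) t := by
    have hid := (hasDerivAt_id' t).sub_const a
    exact (((hid.const_mul M).const_add (f' a)).sub (hf' t)).congr_deriv (by rw [mul_one])
  have hconvex : ConvexOn ℝ Set.univ gap :=
    convexOn_of_hasDerivWithinAt2_nonneg convex_univ
      (fun t _ => (hgap t).continuousAt.continuousWithinAt)
      (fun t _ => (hgap t).hasDerivWithinAt) (fun t _ => (hgap' t).hasDerivWithinAt)
      (fun t _ => sub_nonneg.2 (hM t))
  have hmin : IsMinOn gap Set.univ a := by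
    refine hconvex.isMinOn_of_rightDeriv_eq_zero (by simp) ?_
    rw [(hgap a).hasDerivWithinAt.derivWithin (uniqueDiffWithinAt_Ioi a)]
    ring
  have hle : -f a ≤ gap b := (by simp [gap] : -f a = gap a).trans_le (hmin (Set.mem_univ b))
  simp only [gap] at hle
  linarith

theorem hasDerivAt_log_one_add_exp (t : ℝ) :
    HasDerivAt (fun t => Real.log (1 + Real.exp t)) (Real.sigmoid t) t := by
  refine (((Real.hasDerivAt_exp t).const_add 1).log (by positivity)).congr_deriv ?_
  rw [Real.sigmoid_def, Real.exp_neg]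
  field_simp
  ring

theorem log_one_add_exp_le_quadratic (a b : ℝ) :
    Real.log (1 + Real.exp b) ≤
      Real.log (1 + Real.exp a) + Real.sigmoid a * (b - a) + (b - a) ^ 2 / 8 := by
  have hcurvature (t : ℝ) : Real.sigmoid t * (1 - Real.sigmoid t) ≤ 1 / 4 := by
    linarith [sq_nonneg (Real.sigmoid t - 1 / 2)]
  refine (le_quadratic_of_hasDerivAt2_le hasDerivAt_log_one_add_exp Real.hasDerivAt_sigmoid
    hcurvature a b).trans_eq ?_
  ring

end Softplus

section LogisticLoss

variable {ι E : Type*} [Fintype ι] [NormedAddCommGroup E] [InnerProductSpace ℝ E]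

/-- The average logistic loss of the parameter `z` on the samples `x i` with labels `y i`. -/
noncomputable def logisticLoss (x : ι → E) (y : ι → ℝ) (z : E) : ℝ :=
  1 / (Fintype.card ι : ℝ) * ∑ i, (Real.log (1 + Real.exp ⟪x i, z⟫) - y i * ⟪x i, z⟫)

variable [CompleteSpace E]

theorem hasGradientAt_logisticLoss (x : ι → E) (y : ι → ℝ) (z : E) :
    HasGradientAt (logisticLoss x y)
      ((1 / (Fintype.card ι : ℝ)) • ∑ i, (Real.sigmoid ⟪x i, z⟫ - y i) • x i) z := by
  have hinner (i : ι) : HasFDerivAt (fun z => ⟪x i, z⟫) (innerSL ℝ (x i)) z :=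
    (innerSL ℝ (x i)).hasFDerivAt
  have hsum := (HasFDerivAt.fun_sum (u := Finset.univ) fun i _ =>
    ((hasDerivAt_log_one_add_exp _).comp_hasFDerivAt z (hinner i)).sub
      ((hinner i).const_mul (y i))).const_mul (1 / (Fintype.card ι : ℝ))
  refine hasGradientAt_iff_hasFDerivAt.2 (hsum.congr_fderiv ?_)
  ext v
  simp [sub_mul]

theorem logisticLoss_le_quadratic (x : ι → E) (y : ι → ℝ) (z w : E) :
    logisticLoss x y w ≤ logisticLoss x y z + ⟪gradient (logisticLoss x y) z, w - z⟫ +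
      1 / (8 * Fintype.card ι) * ∑ i, ⟪x i, w - z⟫ ^ 2 := by
  have hterm (i : ι) : Real.log (1 + Real.exp ⟪x i, w⟫) - y i * ⟪x i, w⟫ ≤
      (Real.log (1 + Real.exp ⟪x i, z⟫) - y i * ⟪x i, z⟫) +
        (Real.sigmoid ⟪x i, z⟫ - y i) * ⟪x i, w - z⟫ + ⟪x i, w - z⟫ ^ 2 / 8 := by
    rw [inner_sub_right]
    linarith [log_one_add_exp_le_quadratic ⟪x i, z⟫ ⟪x i, w⟫]
  calc logisticLoss x y w
    _ ≤ 1 / (Fintype.card ι : ℝ) * ∑ i, ((Real.log (1 + Real.exp ⟪x i, z⟫) - y i * ⟪x i, z⟫) +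
        (Real.sigmoid ⟪x i, z⟫ - y i) * ⟪x i, w - z⟫ + ⟪x i, w - z⟫ ^ 2 / 8) := by
      unfold logisticLoss
      gcongr with i
      exact hterm i
    _ = _ := by
      rw [(hasGradientAt_logisticLoss x y z).gradient, real_inner_smul_left, sum_inner]
      simp only [logisticLoss, real_inner_smul_left, Finset.sum_add_distrib, ← Finset.sum_div]
      ring

end LogisticLoss

section LargestEigenvalue

variable {𝕜 m n : Type*} [RCLike 𝕜] [Fintype m] [Fintype n] [DecidableEq n]

open scoped ComplexOrder MatrixOrder in
theorem re_star_dotProduct_mulVec_le_iSup_eigenvalues_mul {A : Matrix n n 𝕜} (hA : A.IsHermitian)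
    (v : n → 𝕜) :
    RCLike.re (star v ⬝ᵥ A *ᵥ v) ≤ (⨆ i, hA.eigenvalues i) * ‖toLp 2 v‖ ^ 2 := by
  have hle : A ≤ algebraMap ℝ _ (⨆ i, hA.eigenvalues i) := by
    refine le_algebraMap_of_spectrum_le (fun μ hμ => ?_) hA.isSelfAdjoint
    obtain ⟨i, rfl⟩ := hA.spectrum_real_eq_range_eigenvalues ▸ hμ
    exact le_ciSup (Set.finite_range _).bddAbove i
  have hnonneg := (Matrix.le_iff.1 hle).re_dotProduct_nonneg v
  rw [sub_mulVec, dotProduct_sub, map_sub, sub_nonneg, Algebra.algebraMap_eq_smul_one,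
    smul_mulVec, one_mulVec, dotProduct_smul, RCLike.smul_re] at hnonneg
  rwa [← inner_self_eq_norm_sq (𝕜 := 𝕜), EuclideanSpace.inner_toLp_toLp, dotProduct_comm v]

theorem norm_toLp_mulVec_sq_le_iSup_eigenvalues_mul (X : Matrix m n 𝕜) (v : n → 𝕜) :
    ‖toLp 2 (X *ᵥ v)‖ ^ 2 ≤
      (⨆ i, (isHermitian_conjTranspose_mul_self X).eigenvalues i) * ‖toLp 2 v‖ ^ 2 := by
  refine le_of_eq_of_le ?_ (re_star_dotProduct_mulVec_le_iSup_eigenvalues_mul _ v)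
  rw [← mulVec_mulVec, dotProduct_mulVec, vecMul_conjTranspose, star_star,
    ← inner_self_eq_norm_sq (𝕜 := 𝕜), EuclideanSpace.inner_toLp_toLp, dotProduct_comm]

open scoped ComplexOrder in
theorem iSup_eigenvalues_conjTranspose_mul_self_pos {X : Matrix m n 𝕜} (hX : X ≠ 0) :
    0 < ⨆ i, (isHermitian_conjTranspose_mul_self X).eigenvalues i := by
  obtain ⟨i, hi⟩ : ∃ i, (isHermitian_conjTranspose_mul_self X).eigenvalues i ≠ 0 :=
    Function.ne_iff.1 <| (isHermitian_conjTranspose_mul_self X).eigenvalues_eq_zero_iff.not.2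
      (conjTranspose_mul_self_eq_zero.not.2 hX)
  exact ((eigenvalues_conjTranspose_mul_self_nonneg X i).lt_of_ne' hi).trans_le
    (le_ciSup (Set.finite_range _).bddAbove i)

end LargestEigenvalue

section Rows

variable {ι κ : Type*} [Fintype κ]

theorem inner_toLp_row (X : Matrix ι κ ℝ) (i : ι) (z : EuclideanSpace ℝ κ) :
    ⟪toLp 2 (X.row i), z⟫ = (X *ᵥ z.ofLp) i := by
  rw [EuclideanSpace.inner_eq_star_dotProduct, star_trivial, dotProduct_comm]
  rfl

variable [Fintype ι] [DecidableEq κ]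

theorem sum_inner_toLp_row_sq_le (X : Matrix ι κ ℝ) (v : EuclideanSpace ℝ κ) :
    ∑ i, ⟪toLp 2 (X.row i), v⟫ ^ 2 ≤
      (⨆ i, (isHermitian_conjTranspose_mul_self X).eigenvalues i) * ‖v‖ ^ 2 := by
  simpa only [inner_toLp_row, EuclideanSpace.real_norm_sq_eq] using
    norm_toLp_mulVec_sq_le_iSup_eigenvalues_mul X v.ofLp

/-- The constant `λ_x = λ_max (XᵀX) / (4 n)`, which bounds the curvature of the logistic loss whose
samples are the `n` rows of `X`. The Gram matrix is written with `ᴴ`, which is `ᵀ` over `ℝ`. -/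
noncomputable def logisticCurvature (X : Matrix ι κ ℝ) : ℝ :=
  (⨆ i, (isHermitian_conjTranspose_mul_self X).eigenvalues i) / (4 * Fintype.card ι)

theorem logisticCurvature_pos {X : Matrix ι κ ℝ} (hX : X ≠ 0) : 0 < logisticCurvature X := by
  have : Nonempty ι := not_isEmpty_iff.1 fun _ => hX (Subsingleton.elim X 0)
  have := iSup_eigenvalues_conjTranspose_mul_self_pos hX
  unfold logisticCurvature
  positivity

theorem logisticLoss_row_le_quadratic (X : Matrix ι κ ℝ) (y : ι → ℝ) (z w : EuclideanSpace ℝ κ) :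
    logisticLoss (fun i => toLp 2 (X.row i)) y w ≤
      logisticLoss (fun i => toLp 2 (X.row i)) y z +
        ⟪gradient (logisticLoss (fun i => toLp 2 (X.row i)) y) z, w - z⟫ +
        logisticCurvature X / 2 * ‖w - z‖ ^ 2 := by
  refine (logisticLoss_le_quadratic _ y z w).trans (add_le_add_right ?_ _)
  calc 1 / (8 * Fintype.card ι) * ∑ i, ⟪toLp 2 (X.row i), w - z⟫ ^ 2
    _ ≤ 1 / (8 * Fintype.card ι) *
        ((⨆ i, (isHermitian_conjTranspose_mul_self X).eigenvalues i) * ‖w - z‖ ^ 2) := by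
      gcongr
      exact sum_inner_toLp_row_sq_le X (w - z)
    _ = logisticCurvature X / 2 * ‖w - z‖ ^ 2 := by
      unfold logisticCurvature
      ring

theorem global_minimizer_is_strong_stationary_general {X : Matrix ι κ ℝ} (hX : X ≠ 0) (y : ι → ℝ)
    {S : Set (EuclideanSpace ℝ κ)} {zs : EuclideanSpace ℝ κ} (hzs : zs ∈ S)
    (hmin : IsMinOn (logisticLoss (fun i => toLp 2 (X.row i)) y) S zs) :
    0 < logisticCurvature X ∧ ∀ τ : ℝ, 0 < τ → τ < 1 / logisticCurvature X →
      nearestPoints S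
        (zs - τ • gradient (logisticLoss (fun i => toLp 2 (X.row i)) y) zs) = {zs} :=
  ⟨logisticCurvature_pos hX, fun _ hτ hτlt =>
    nearestPoints_sub_smul_eq_singleton_of_isMinOn hzs hmin
      (fun x _ => logisticLoss_row_le_quadratic X y zs x) hτ.le
      ((lt_div_iff₀ (logisticCurvature_pos hX)).1 hτlt)⟩

end Rows

/-- if `X ≠ 0` then `λ_x = λ_max(XᵀX)/(4n) > 0`, and every global
minimizer `z*` of `ℓ` over the sparse set `S` is a strong τ-stationary point for
every `τ ∈ (0, 1/λ_x)`. -/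
theorem global_minimizer_is_strong_stationary (n p s : ℕ)
    (hn : 0 < n) (hs : 0 < s) (hsp : s < p)
    (X : Matrix (Fin n) (Fin p) ℝ) (hX : X ≠ 0) (y : Fin n → ℝ)
    (hy : ∀ i, y i = 0 ∨ y i = 1)
    (ℓ : EuclideanSpace ℝ (Fin p) → ℝ)
    (hℓ : ∀ z, ℓ z = (1 / (n : ℝ)) *
      ∑ i, (Real.log (1 + Real.exp (∑ j, X i j * z j)) - y i * (∑ j, X i j * z j)))
    (hH : (Xᵀ * X).IsHermitian)
    (lamx : ℝ) (hlamx : lamx = (⨆ i, hH.eigenvalues i) / (4 * n))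
    (zs : EuclideanSpace ℝ (Fin p)) (hzs : norm0 zs ≤ s)
    (hmin : ∀ z : EuclideanSpace ℝ (Fin p), norm0 z ≤ s → ℓ zs ≤ ℓ z) :
    0 < lamx ∧
      ∀ τ : ℝ, 0 < τ → τ < 1 / lamx →
        projS s (zs - τ • gradient ℓ zs) = {zs} := by
  obtain rfl : ℓ = logisticLoss (fun i => toLp 2 (X.row i)) y := funext fun z => by
    simp [hℓ, logisticLoss, inner_toLp_row, mulVec, dotProduct]
  obtain rfl : lamx = logisticCurvature X := by
    rw [hlamx, logisticCurvature, Fintype.card_fin]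
    rfl
  exact global_minimizer_is_strong_stationary_general hX y (S := {z | norm0 z ≤ s}) hzs hmin
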